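/- Let k ≥ 2 be an integer, let a < b be reals, and let a = y_0 < y_1 < ⋯ < y_{2k−4} < y_{2k−3} = b be given points. For every continuously differentiable function f : ℝ → ℝ there exists exactly one function H : [a,b] → ℝ such that (i) H is (2k−2)-times continuously differentiable on [a,b], (ii) for each i ∈ {0,…,2k−4}, H agrees on [y_i, y_{i+1}] with a polynomial of degree at most 2k−1, and (iii) H(y_i) = f(y_i) and H′(y_i) = f′(y_i) for all i = 0,…,2k−3. -/

import Mathlib

open Set

/-- `IsHermiteSplineInterp k τ f H` says that `H` is a Hermite spline interpolant of `f`
of degree `2k-1` with knots `τ 0 < τ 1 < ⋯ < τ (2k-3)` (so interior knots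
`τ 1, …, τ (2k-4)`): `H` is `(2k-2)`-times continuously differentiable on
`[τ 0, τ (2k-3)]`, agrees on each knot interval with a polynomial of degree at most
`2k-1`, and matches the values and first derivatives of `f` at all the knots. -/
def IsHermiteSplineInterp (k : ℕ) (τ : ℕ → ℝ) (f H : ℝ → ℝ) : Prop :=
  ContDiffOn ℝ (2*k-2 : ℕ) H (Icc (τ 0) (τ (2*k-3))) ∧
  (∀ i, i < 2*k-3 → ∃ p : Polynomial ℝ, p.natDegree ≤ 2*k-1 ∧
    ∀ x ∈ Icc (τ i) (τ (i+1)), H x = p.eval x) ∧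
  (∀ i, i < 2*k-2 →
    H (τ i) = f (τ i) ∧
    derivWithin H (Icc (τ 0) (τ (2*k-3))) (τ i)
      = derivWithin f (Icc (τ 0) (τ (2*k-3))) (τ i))

/-!
In the truncated power basis, splines with `m` interior knots and degree `m + 3` are parametrized
by `2 (m + 2)` coefficients, as many as there are Hermite conditions, so existence follows from
uniqueness. For uniqueness, suppose that a nonzero spline has double zeros at all knots. A
polynomial of degree `m + 3` with a zero of order `m + 3` and a further zero vanishes, so if the
spline vanished on one piece it would vanish on the neighbouring ones; hence it vanishes on none.
By Rolle its second derivative then takes three alternating signs on each of the `m + 1` pieces,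
`2 m + 3` altogether since at most one is lost at each interior knot. Each further derivative loses
at most one, so the derivative of order `m + 3` still takes `m + 2` alternating signs, although it
is constant on each of the `m + 1` pieces.
-/

open Polynomial

section Alternation

/-- `HasAlternation g n s l r` says that `g` takes values of alternating strict sign at some `n`
points of `[l, r)`, listed from left to right, the first value having the sign `s`. The recursion
lists the points in weakly increasing order; they are distinct because the signs change. -/
def HasAlternation (g : ℝ → ℝ) : ℕ → ℤˣ → ℝ → ℝ → Prop
  | 0, _, _, _ => True
  | n + 1, s, l, r => ∃ x ∈ Ico l r, 0 < (s : ℝ) * g x ∧ HasAlternation g n (-s) x r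

variable {g g' : ℝ → ℝ} {m n : ℕ} {s : ℤˣ} {l c r : ℝ}

theorem HasAlternation.mono_left (h : HasAlternation g n s c r) (hlc : l ≤ c) :
    HasAlternation g n s l r := by
  cases n with
  | zero => trivial
  | succ n =>
    obtain ⟨x, hx, hsx, htail⟩ := h
    exact ⟨x, Ico_subset_Ico_left hlc hx, hsx, htail⟩

theorem HasAlternation.pred (h : HasAlternation g (n + 1) s l r) : HasAlternation g n s l r := by
  induction n generalizing s l with
  | zero => trivial
  | succ n ih =>
    obtain ⟨x, hx, hsx, htail⟩ := h
    exact ⟨x, hx, hsx, ih htail⟩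

theorem HasAlternation.pred_neg (h : HasAlternation g (n + 1) s l r) :
    HasAlternation g n (-s) l r := by
  obtain ⟨x, hx, -, htail⟩ := h
  exact htail.mono_left hx.1

theorem HasAlternation.of_succ (h : HasAlternation g (n + 1) s l r) (t : ℤˣ) :
    HasAlternation g n t l r := by
  rcases eq_or_ne t s with rfl | hts
  · exact h.pred
  · rw [Int.units_ne_iff_eq_neg.1 hts]
    exact h.pred_neg

theorem HasAlternation.append (h : HasAlternation g n s l c) (hlc : l ≤ c) (hcr : c ≤ r)
    (h' : ∀ t, HasAlternation g m t c r) : HasAlternation g (m + n) s l r := by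
  induction n generalizing s l with
  | zero => exact (h' s).mono_left hlc
  | succ n ih =>
    obtain ⟨x, hx, hsx, htail⟩ := h
    exact ⟨x, Ico_subset_Ico_right hcr hx, hsx, ih htail hx.2.le⟩

end Alternation

section Rolle

/-- `HasRightDerivOn g g' l r` says that `g` is continuous on `[l, r]` and has the right derivative
`g'` on `[l, r)`. One-sided derivatives are what remains of the top derivative of a spline at its
knots. -/
structure HasRightDerivOn (g g' : ℝ → ℝ) (l r : ℝ) : Prop where
  continuousOn : ContinuousOn g (Icc l r)
  hasDerivWithinAt : ∀ x ∈ Ico l r, HasDerivWithinAt g (g' x) (Ici x) x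

variable {g g' : ℝ → ℝ} {n : ℕ} {s : ℤˣ} {l c r : ℝ}

theorem HasRightDerivOn.mono {l' r' : ℝ} (hg : HasRightDerivOn g g' l r) (hl : l ≤ l')
    (hr : r' ≤ r) : HasRightDerivOn g g' l' r' :=
  ⟨hg.continuousOn.mono (Icc_subset_Icc hl hr),
    fun x hx => hg.hasDerivWithinAt x (Ico_subset_Ico hl hr hx)⟩

theorem HasRightDerivOn.exists_mul_pos (hg : HasRightDerivOn g g' l r) (hlr : l ≤ r) {a : ℝ}
    (h : 0 < a * (g r - g l)) : ∃ x ∈ Ico l r, 0 < a * g' x := by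
  by_contra! hcon
  have hle : a * g r ≤ a * g l :=
    image_le_of_deriv_right_le_deriv_boundary (f := fun x => a * g x) (B := fun _ => a * g l)
      (continuousOn_const.mul hg.continuousOn)
      (fun x hx => (hg.hasDerivWithinAt x hx).const_mul a) le_rfl continuousOn_const
      (fun x _ => hasDerivWithinAt_const x (Ici x) (a * g l)) hcon (right_mem_Icc.2 hlr)
  linarith

theorem HasRightDerivOn.hasAlternation_cons (hg : HasRightDerivOn g g' l r) (hc : c ∈ Icc l r)
    (h : 0 < (s : ℝ) * (g c - g l)) (htail : HasAlternation g' n (-s) c r) :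
    HasAlternation g' (n + 1) s l r := by
  obtain ⟨ξ, hξ, hsξ⟩ := (hg.mono le_rfl hc.2).exists_mul_pos hc.1 h
  exact ⟨ξ, Ico_subset_Ico_right hc.2 hξ, hsξ, htail.mono_left hξ.2.le⟩

theorem HasRightDerivOn.hasAlternation_of_left_pos (hg : HasRightDerivOn g g' l r)
    (hl : 0 < (s : ℝ) * g l) (h : HasAlternation g n (-s) l r) :
    HasAlternation g' n (-s) l r := by
  induction n generalizing l s with
  | zero => trivial
  | succ n ih =>
    obtain ⟨x, hx, hsx, htail⟩ := h
    refine hg.hasAlternation_cons (Ico_subset_Icc_self hx) ?_ (ih (hg.mono hx.1 le_rfl) hsx htail)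
    push_cast at hsx ⊢
    linarith

theorem HasRightDerivOn.hasAlternation (hg : HasRightDerivOn g g' l r)
    (h : HasAlternation g (n + 1) s l r) : HasAlternation g' n (-s) l r := by
  obtain ⟨x, hx, hsx, htail⟩ := h
  exact ((hg.mono hx.1 le_rfl).hasAlternation_of_left_pos hsx htail).mono_left hx.1

theorem HasRightDerivOn.hasAlternation_succ_of_left_pos (hg : HasRightDerivOn g g' l r)
    (hlr : l ≤ r) (hr : g r = 0) (hl : 0 < (s : ℝ) * g l) (h : HasAlternation g n (-s) l r) :
    HasAlternation g' (n + 1) (-s) l r := by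
  induction n generalizing l s with
  | zero =>
    refine hg.hasAlternation_cons (right_mem_Icc.2 hlr) ?_ trivial
    push_cast
    rw [hr]
    linarith
  | succ n ih =>
    obtain ⟨x, hx, hsx, htail⟩ := h
    refine hg.hasAlternation_cons (Ico_subset_Icc_self hx) ?_
      (ih (hg.mono hx.1 le_rfl) hx.2.le hsx htail)
    push_cast at hsx ⊢
    linarith

theorem HasRightDerivOn.hasAlternation_succ (hg : HasRightDerivOn g g' l r)
    (hl : g l = 0) (hr : g r = 0) (h : HasAlternation g (n + 1) s l r) :
    HasAlternation g' (n + 2) s l r := by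
  obtain ⟨x, hx, hsx, htail⟩ := h
  refine hg.hasAlternation_cons (Ico_subset_Icc_self hx) (by rwa [hl, sub_zero]) ?_
  exact (hg.mono hx.1 le_rfl).hasAlternation_succ_of_left_pos hx.2.le hr hsx htail

theorem exists_hasAlternation_three {g g₁ g₂ : ℝ → ℝ} (hg : HasRightDerivOn g g₁ l r)
    (hg₁ : HasRightDerivOn g₁ g₂ l r) (hl : g l = 0) (hr : g r = 0) (hl₁ : g₁ l = 0)
    (hr₁ : g₁ r = 0) (hne : ∃ z ∈ Icc l r, g z ≠ 0) : ∃ s, HasAlternation g₂ 3 s l r := by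
  obtain ⟨z, hz, hgz⟩ := hne
  have hzr : z < r := hz.2.lt_of_ne (by rintro rfl; exact hgz hr)
  obtain ⟨s, hs⟩ : ∃ s : ℤˣ, 0 < (s : ℝ) * g z := by
    rcases hgz.lt_or_gt with h | h
    · exact ⟨-1, by simpa using h⟩
    · exact ⟨1, by simpa using h⟩
  have h₀ : HasAlternation g 1 s l r := ⟨z, ⟨hz.1, hzr⟩, hs, trivial⟩
  exact ⟨s, hg₁.hasAlternation_succ hl₁ hr₁ (hg.hasAlternation_succ hl hr h₀)⟩

theorem exists_hasAlternation_of_chain {G : ℕ → ℝ → ℝ} {j : ℕ}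
    (hG : ∀ i < j, HasRightDerivOn (G i) (G (i + 1)) l r)
    (h : HasAlternation (G 0) (n + j) s l r) : ∃ t, HasAlternation (G j) n t l r := by
  induction j generalizing n with
  | zero => exact ⟨s, h⟩
  | succ j ih =>
    obtain ⟨t, ht⟩ := ih (n := n + 1) (fun i hi => hG i (by omega))
      (by rwa [Nat.add_right_comm, Nat.add_assoc])
    exact ⟨-t, (hG j (Nat.lt_succ_self j)).hasAlternation ht⟩

end Rolle

section Step

variable {g : ℝ → ℝ} {τ : ℕ → ℝ} {m n : ℕ} {s : ℤˣ}

theorem exists_hasAlternation_of_pieces (hτ : MonotoneOn τ (Iic m)) (hm : m ≠ 0)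
    (h : ∀ i < m, ∃ s, HasAlternation g (n + 1) s (τ i) (τ (i + 1))) :
    ∃ s, HasAlternation g (n * m + 1) s (τ 0) (τ m) := by
  induction m, Nat.one_le_iff_ne_zero.2 hm using Nat.le_induction with
  | base => simpa using h 0 one_pos
  | succ m hm' ih =>
    obtain ⟨s, hs⟩ := ih (hτ.mono (Iic_subset_Iic.2 m.le_succ)) (by omega)
      fun i hi => h i (by omega)
    obtain ⟨t, ht⟩ := h m m.lt_succ_self
    have hleft : τ 0 ≤ τ m := hτ (by simp) (by simp) m.zero_le
    have hright : τ m ≤ τ (m + 1) := hτ (by simp) (by simp) m.le_succ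
    refine ⟨s, ?_⟩
    rw [show n * (m + 1) + 1 = n + (n * m + 1) by ring]
    exact hs.append hleft hright ht.of_succ

/- The hypothesis on `[l, τ i)` forces the first point of the alternation into the `i`-th piece or
a later one; it is inherited by the tail because `g` keeps its sign on the piece of that point. -/
theorem HasAlternation.add_le_of_piecewise_const (hτ : MonotoneOn τ (Iic m))
    (hg : ∀ i < m, ∃ c, ∀ x ∈ Ico (τ i) (τ (i + 1)), g x = c) {i : ℕ} (hi : i ≤ m) {l : ℝ}
    (hl : τ 0 ≤ l) (hneg : ∀ x ∈ Ico l (τ i), (s : ℝ) * g x ≤ 0)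
    (h : HasAlternation g n s l (τ m)) : n + i ≤ m := by
  induction n generalizing s l i with
  | zero => simpa using hi
  | succ n ih =>
    obtain ⟨x, hx, hsx, htail⟩ := h
    obtain ⟨j, hj, hxj⟩ : ∃ j < m, x ∈ Ico (τ j) (τ (j + 1)) := by
      simpa only [mem_iUnion₂, Finset.mem_range, exists_prop] using
        Ico_subset_biUnion_Ico m τ ⟨hl.trans hx.1, hx.2⟩
    have hix : τ i ≤ x := not_lt.1 fun hlt => hsx.not_ge (hneg x ⟨hx.1, hlt⟩)
    have hij : i ≤ j := by
      by_contra! hji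
      exact (hix.trans_lt hxj.2).not_ge (hτ (mem_Iic.2 hj) (mem_Iic.2 hi) hji)
    have htail_le : n + (j + 1) ≤ m := by
      refine ih hj (hl.trans hx.1) (fun z hz => ?_) htail
      obtain ⟨c, hc⟩ := hg j hj
      rw [hc x hxj] at hsx
      rw [hc z ⟨hxj.1.trans hz.1, hz.2⟩]
      push_cast
      linarith
    omega

theorem HasAlternation.le_of_piecewise_const (hτ : MonotoneOn τ (Iic m))
    (hg : ∀ i < m, ∃ c, ∀ x ∈ Ico (τ i) (τ (i + 1)), g x = c)
    (h : HasAlternation g n s (τ 0) (τ m)) : n ≤ m :=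
  h.add_le_of_piecewise_const hτ hg m.zero_le le_rfl (by simp)

end Step

section Derivatives

theorem eqOn_iteratedDerivWithin_of_eqOn_Icc {n j : ℕ} {f g : ℝ → ℝ} {u v : ℝ} {s : Set ℝ}
    (hf : ContDiffOn ℝ n f s) (hg : ContDiff ℝ n g) (hs : UniqueDiffOn ℝ s) (huv : u < v)
    (hsub : Icc u v ⊆ s) (hfg : EqOn f g (Icc u v)) (hj : j ≤ n) :
    EqOn (iteratedDerivWithin j f s) (iteratedDeriv j g) (Icc u v) := by
  have hjn : (j : WithTop ℕ∞) ≤ n := by exact_mod_cast hj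
  have hIoo : EqOn (iteratedDerivWithin j f s) (iteratedDeriv j g) (Ioo u v) := by
    intro x hx
    have hmem : Icc u v ∈ nhds x := Icc_mem_nhds hx.1 hx.2
    have hsx : s ∈ nhds x := Filter.mem_of_superset hmem hsub
    rw [iteratedDerivWithin_eq_iteratedDeriv hs ((hf.contDiffAt hsx).of_le hjn)
      (mem_of_mem_nhds hsx)]
    exact Filter.EventuallyEq.iteratedDeriv_eq j (Filter.mem_of_superset hmem hfg)
  refine hIoo.of_subset_closure ((hf.continuousOn_iteratedDerivWithin hjn hs).mono hsub)
    (hg.continuous_iteratedDeriv j hjn).continuousOn Ioo_subset_Icc_self ?_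
  rw [closure_Ioo huv.ne]

theorem hasRightDerivOn_iteratedDerivWithin {n j : ℕ} {f : ℝ → ℝ} {a b : ℝ} (hab : a < b)
    (hf : ContDiffOn ℝ n f (Icc a b)) (hj : j < n) :
    HasRightDerivOn (iteratedDerivWithin j f (Icc a b)) (iteratedDerivWithin (j + 1) f (Icc a b))
      a b where
  continuousOn := hf.continuousOn_iteratedDerivWithin (by exact_mod_cast hj.le)
    (uniqueDiffOn_Icc hab)
  hasDerivWithinAt x hx := by
    have hdiff := hf.differentiableOn_iteratedDerivWithin (by exact_mod_cast hj)
      (uniqueDiffOn_Icc hab) x (Ico_subset_Icc_self hx)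
    rw [iteratedDerivWithin_succ]
    exact hdiff.hasDerivWithinAt.mono_of_mem_nhdsWithin
      (Filter.mem_of_superset (Icc_mem_nhdsGE hx.2) (Icc_subset_Icc_left hx.1))

end Derivatives

section PolynomialLemmas

theorem contDiff_polynomial_eval (p : ℝ[X]) {n : WithTop ℕ∞} :
    ContDiff ℝ n fun x => p.eval x :=
  p.contDiff_aeval n

theorem iteratedDeriv_polynomial_eval (p : ℝ[X]) (j : ℕ) :
    iteratedDeriv j (fun x => p.eval x) = fun x => (derivative^[j] p).eval x := by
  induction j with
  | zero => simp
  | succ j ih =>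
    funext x
    rw [iteratedDeriv_succ, ih, Polynomial.deriv, Function.iterate_succ_apply']

theorem polynomial_eq_zero_of_derivatives_eq_zero {K : Type*} [Field K] [CharZero K] {n : ℕ}
    {p : K[X]} (hp : p.natDegree ≤ n + 1) {u v : K} (huv : u ≠ v)
    (hu : ∀ j ≤ n, (derivative^[j] p).IsRoot u) (hv : p.IsRoot v) : p = 0 := by
  by_contra hne
  have hdvd_u : (X - C u) ^ (n + 1) ∣ p := (le_rootMultiplicity_iff hne).1
    ((lt_rootMultiplicity_iff_isRoot_iterate_derivative hne).2 hu)
  have hcop : IsCoprime ((X - C u) ^ (n + 1)) (X - C v) :=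
    (isCoprime_X_sub_C_of_isUnit_sub (sub_ne_zero.2 huv).isUnit).pow_left
  have hdeg := natDegree_le_of_dvd (hcop.mul_dvd hdvd_u (dvd_iff_isRoot.2 hv)) hne
  rw [natDegree_mul (pow_ne_zero _ (X_sub_C_ne_zero _)) (X_sub_C_ne_zero _), natDegree_pow,
    natDegree_X_sub_C, natDegree_X_sub_C] at hdeg
  omega

end PolynomialLemmas

section Spline

/-- `IsSplineOn n m τ H` says that `H` is a spline of degree `n + 1` and smoothness `n` on
`[τ 0, τ (m + 1)]` with the `m` interior knots `τ 1, …, τ m`. Values of `H` outside this interval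
and of `τ` beyond `m + 1` are irrelevant. -/
structure IsSplineOn (n m : ℕ) (τ : ℕ → ℝ) (H : ℝ → ℝ) : Prop where
  contDiffOn : ContDiffOn ℝ n H (Icc (τ 0) (τ (m + 1)))
  exists_polynomial : ∀ i ≤ m, ∃ p : ℝ[X], p.natDegree ≤ n + 1 ∧
    ∀ x ∈ Icc (τ i) (τ (i + 1)), H x = p.eval x

variable {n m i j : ℕ} {τ : ℕ → ℝ} {H : ℝ → ℝ}

theorem knot_lt_succ (hτ : StrictMonoOn τ (Iic (m + 1))) (hi : i ≤ m) : τ i < τ (i + 1) :=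
  hτ (mem_Iic.2 (by omega)) (mem_Iic.2 (by omega)) i.lt_succ_self

theorem first_knot_lt_last (hτ : StrictMonoOn τ (Iic (m + 1))) : τ 0 < τ (m + 1) :=
  hτ (mem_Iic.2 (by omega)) (mem_Iic.2 le_rfl) m.succ_pos

theorem knot_mem_Icc (hτ : StrictMonoOn τ (Iic (m + 1))) (hi : i ≤ m + 1) :
    τ i ∈ Icc (τ 0) (τ (m + 1)) :=
  ⟨hτ.monotoneOn (mem_Iic.2 (by omega)) (mem_Iic.2 hi) i.zero_le,
    hτ.monotoneOn (mem_Iic.2 hi) (mem_Iic.2 le_rfl) hi⟩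

theorem piece_subset_Icc (hτ : StrictMonoOn τ (Iic (m + 1))) (hi : i ≤ m) :
    Icc (τ i) (τ (i + 1)) ⊆ Icc (τ 0) (τ (m + 1)) :=
  Icc_subset_Icc (knot_mem_Icc hτ (by omega)).1 (knot_mem_Icc hτ (by omega)).2

theorem IsSplineOn.eqOn_iteratedDerivWithin (hτ : StrictMonoOn τ (Iic (m + 1)))
    (hH : IsSplineOn n m τ H) (hi : i ≤ m) {g : ℝ → ℝ} (hg : ContDiff ℝ n g)
    (hHg : EqOn H g (Icc (τ i) (τ (i + 1)))) (hj : j ≤ n) :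
    EqOn (iteratedDerivWithin j H (Icc (τ 0) (τ (m + 1)))) (iteratedDeriv j g)
      (Icc (τ i) (τ (i + 1))) :=
  eqOn_iteratedDerivWithin_of_eqOn_Icc hH.contDiffOn hg
    (uniqueDiffOn_Icc (first_knot_lt_last hτ)) (knot_lt_succ hτ hi) (piece_subset_Icc hτ hi) hHg hj

theorem IsSplineOn.exists_hasRightDerivOn_piecewise_const (hτ : StrictMonoOn τ (Iic (m + 1)))
    (hH : IsSplineOn n m τ H) :
    ∃ d : ℝ → ℝ,
      HasRightDerivOn (iteratedDerivWithin n H (Icc (τ 0) (τ (m + 1)))) d (τ 0) (τ (m + 1)) ∧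
      ∀ i < m + 1, ∃ c, ∀ x ∈ Ico (τ i) (τ (i + 1)), d x = c := by
  set G := iteratedDerivWithin n H (Icc (τ 0) (τ (m + 1)))
  have hpiece : ∀ i < m + 1, ∃ c, ∀ x ∈ Ico (τ i) (τ (i + 1)), HasDerivWithinAt G c (Ici x) x := by
    intro i hi
    obtain ⟨p, hp, hHp⟩ := hH.exists_polynomial i (by omega)
    have hG := hH.eqOn_iteratedDerivWithin hτ (by omega) (contDiff_polynomial_eval p) hHp le_rfl
    rw [iteratedDeriv_polynomial_eval] at hG
    have hdeg : (derivative (derivative^[n] p)).natDegree = 0 := by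
      have hle := natDegree_iterate_derivative p (n + 1)
      rw [Function.iterate_succ_apply'] at hle
      omega
    refine ⟨(derivative (derivative^[n] p)).coeff 0, fun x hx => ?_⟩
    have hderiv := (derivative^[n] p).hasDerivWithinAt x (Ici x)
    rw [eq_C_of_natDegree_eq_zero hdeg, eval_C] at hderiv
    refine hderiv.congr_of_eventuallyEq ?_ (hG (Ico_subset_Icc_self hx))
    filter_upwards [Icc_mem_nhdsGE hx.2] with z hz using hG ⟨hx.1.trans hz.1, hz.2⟩
  refine ⟨fun x => derivWithin G (Ici x) x, ⟨?_, fun x hx => ?_⟩, fun i hi => ?_⟩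
  · exact hH.contDiffOn.continuousOn_iteratedDerivWithin le_rfl
      (uniqueDiffOn_Icc (first_knot_lt_last hτ))
  · obtain ⟨i, hi, hxi⟩ := mem_iUnion₂.1 (Ico_subset_biUnion_Ico (m + 1) τ hx)
    obtain ⟨c, hc⟩ := hpiece i (Finset.mem_range.1 hi)
    exact (hc x hxi).differentiableWithinAt.hasDerivWithinAt
  · obtain ⟨c, hc⟩ := hpiece i hi
    exact ⟨c, fun x hx => (hc x hx).derivWithin (uniqueDiffOn_Ici x x self_mem_Ici)⟩

theorem IsSplineOn.add_le_of_hasAlternation (hτ : StrictMonoOn τ (Iic (m + 1)))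
    (hH : IsSplineOn n m τ H) (hj : j ≤ n) {N : ℕ} {s : ℤˣ}
    (h : HasAlternation (iteratedDerivWithin j H (Icc (τ 0) (τ (m + 1)))) N s (τ 0) (τ (m + 1))) :
    N + j ≤ m + n + 2 := by
  rcases le_or_gt N (n - j) with hN | hN
  · omega
  obtain ⟨M, rfl⟩ : ∃ M, N = M + 1 + (n - j) := ⟨N - 1 - (n - j), by omega⟩
  obtain ⟨t, htop⟩ := exists_hasAlternation_of_chain
    (G := fun i => iteratedDerivWithin (j + i) H (Icc (τ 0) (τ (m + 1))))
    (fun i hi => hasRightDerivOn_iteratedDerivWithin (first_knot_lt_last hτ) hH.contDiffOn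
      (by omega)) h
  rw [Nat.add_sub_cancel' hj] at htop
  obtain ⟨d, hd, hconst⟩ := hH.exists_hasRightDerivOn_piecewise_const hτ
  have hM := (hd.hasAlternation htop).le_of_piecewise_const hτ.monotoneOn hconst
  omega

theorem IsSplineOn.eqOn_zero_of_adjacent (hτ : StrictMonoOn τ (Iic (m + 1)))
    (hH : IsSplineOn n m τ H) (hi : i ≤ m) (hj : j ≤ m) {u v : ℝ}
    (hui : u ∈ Icc (τ i) (τ (i + 1))) (huj : u ∈ Icc (τ j) (τ (j + 1)))
    (hvj : v ∈ Icc (τ j) (τ (j + 1))) (huv : u ≠ v) (hv : H v = 0)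
    (hzero : EqOn H 0 (Icc (τ i) (τ (i + 1)))) : EqOn H 0 (Icc (τ j) (τ (j + 1))) := by
  obtain ⟨p, hp, hHp⟩ := hH.exists_polynomial j hj
  have hp_flat : ∀ l ≤ n, (derivative^[l] p).IsRoot u := by
    intro l hl
    have hleft := hH.eqOn_iteratedDerivWithin hτ hi contDiff_zero_fun hzero hl hui
    have hright := hH.eqOn_iteratedDerivWithin hτ hj (contDiff_polynomial_eval p) hHp hl huj
    rw [iteratedDeriv_polynomial_eval, hleft] at hright
    exact hright.symm.trans iteratedDeriv_const_zero
  have hp_zero : p = 0 :=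
    polynomial_eq_zero_of_derivatives_eq_zero hp huv hp_flat ((hHp v hvj).symm.trans hv)
  intro x hx
  rw [hHp x hx, hp_zero, eval_zero, Pi.zero_apply]

theorem IsSplineOn.eqOn_zero_piece_iff (hτ : StrictMonoOn τ (Iic (m + 1)))
    (hH : IsSplineOn n m τ H) (hknot : ∀ i ≤ m + 1, H (τ i) = 0) (hi : i ≤ m) :
    EqOn H 0 (Icc (τ i) (τ (i + 1))) ↔ EqOn H 0 (Icc (τ 0) (τ 1)) := by
  induction i with
  | zero => rfl
  | succ i ih =>
    rw [← ih (by omega)]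
    have hlt : τ i < τ (i + 1) := knot_lt_succ hτ (by omega)
    have hlt' : τ (i + 1) < τ (i + 1 + 1) := knot_lt_succ hτ hi
    constructor
    · exact hH.eqOn_zero_of_adjacent hτ hi (by omega) (left_mem_Icc.2 hlt'.le)
        (right_mem_Icc.2 hlt.le) (left_mem_Icc.2 hlt.le) hlt.ne' (hknot _ (by omega))
    · exact hH.eqOn_zero_of_adjacent hτ (by omega) hi (right_mem_Icc.2 hlt.le)
        (left_mem_Icc.2 hlt'.le) (right_mem_Icc.2 hlt'.le) hlt'.ne (hknot _ (by omega))

theorem eqOn_Icc_zero_of_pieces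
    (hpiece : ∀ i ≤ m, EqOn H 0 (Icc (τ i) (τ (i + 1)))) :
    EqOn H 0 (Icc (τ 0) (τ (m + 1))) := by
  induction m with
  | zero => exact hpiece 0 le_rfl
  | succ m ih =>
    exact ((ih fun i hi => hpiece i (by omega)).union (hpiece (m + 1) le_rfl)).mono
      Icc_subset_Icc_union_Icc

theorem IsSplineOn.exists_hasAlternation_piece (hτ : StrictMonoOn τ (Iic (m + 1)))
    (hH : IsSplineOn n m τ H) (hn : 2 ≤ n) (hknot : ∀ i ≤ m + 1, H (τ i) = 0)
    (hderiv : ∀ i ≤ m + 1, derivWithin H (Icc (τ 0) (τ (m + 1))) (τ i) = 0) (hi : i ≤ m)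
    (hne : ¬ EqOn H 0 (Icc (τ i) (τ (i + 1)))) :
    ∃ s, HasAlternation (iteratedDerivWithin 2 H (Icc (τ 0) (τ (m + 1)))) 3 s (τ i)
      (τ (i + 1)) := by
  have hstep : ∀ j < 2, HasRightDerivOn (iteratedDerivWithin j H (Icc (τ 0) (τ (m + 1))))
      (iteratedDerivWithin (j + 1) H (Icc (τ 0) (τ (m + 1)))) (τ i) (τ (i + 1)) := fun j hj =>
    (hasRightDerivOn_iteratedDerivWithin (first_knot_lt_last hτ) hH.contDiffOn (by omega)).mono
      (knot_mem_Icc hτ (by omega)).1 (knot_mem_Icc hτ (by omega)).2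
  have hderiv' : ∀ j ≤ m + 1, iteratedDerivWithin 1 H (Icc (τ 0) (τ (m + 1))) (τ j) = 0 :=
    fun j hj => (congrFun iteratedDerivWithin_one _).trans (hderiv j hj)
  have hG₀ := hstep 0 two_pos
  rw [iteratedDerivWithin_zero] at hG₀
  refine exists_hasAlternation_three hG₀ (hstep 1 one_lt_two) (hknot i (by omega))
    (hknot (i + 1) (by omega)) (hderiv' i (by omega)) (hderiv' (i + 1) (by omega)) ?_
  simpa only [EqOn, not_forall, Pi.zero_apply, exists_prop] using hne

theorem IsSplineOn.eqOn_zero (hτ : StrictMonoOn τ (Iic (m + 1))) (hH : IsSplineOn n m τ H)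
    (hn : 2 ≤ n) (hnm : n ≤ m + 2) (hknot : ∀ i ≤ m + 1, H (τ i) = 0)
    (hderiv : ∀ i ≤ m + 1, derivWithin H (Icc (τ 0) (τ (m + 1))) (τ i) = 0) :
    EqOn H 0 (Icc (τ 0) (τ (m + 1))) := by
  by_cases hzero : EqOn H 0 (Icc (τ 0) (τ 1))
  · exact eqOn_Icc_zero_of_pieces fun i hi => (hH.eqOn_zero_piece_iff hτ hknot hi).2 hzero
  exfalso
  obtain ⟨s, hs⟩ := exists_hasAlternation_of_pieces hτ.monotoneOn m.succ_ne_zero fun i hi =>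
    hH.exists_hasAlternation_piece hτ hn hknot hderiv (Nat.lt_succ_iff.1 hi)
      fun hi_zero => hzero ((hH.eqOn_zero_piece_iff hτ hknot (Nat.lt_succ_iff.1 hi)).1 hi_zero)
  have hcount := hH.add_le_of_hasAlternation hτ hn hs
  omega

theorem IsSplineOn.add {H₁ H₂ : ℝ → ℝ} (h₁ : IsSplineOn n m τ H₁) (h₂ : IsSplineOn n m τ H₂) :
    IsSplineOn n m τ (H₁ + H₂) where
  contDiffOn := h₁.contDiffOn.add h₂.contDiffOn
  exists_polynomial i hi := by
    obtain ⟨p, hp, hHp⟩ := h₁.exists_polynomial i hi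
    obtain ⟨q, hq, hHq⟩ := h₂.exists_polynomial i hi
    refine ⟨p + q, natDegree_add_le_of_degree_le hp hq, fun x hx => ?_⟩
    rw [Pi.add_apply, hHp x hx, hHq x hx, eval_add]

theorem IsSplineOn.const_smul (hH : IsSplineOn n m τ H) (a : ℝ) : IsSplineOn n m τ (a • H) where
  contDiffOn := hH.contDiffOn.const_smul a
  exists_polynomial i hi := by
    obtain ⟨p, hp, hHp⟩ := hH.exists_polynomial i hi
    refine ⟨a • p, (natDegree_smul_le a p).trans hp, fun x hx => ?_⟩
    rw [Pi.smul_apply, hHp x hx, eval_smul]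

theorem isSplineOn_polynomial {p : ℝ[X]} (hp : p.natDegree ≤ n + 1) :
    IsSplineOn n m τ (fun x => p.eval x) where
  contDiffOn := (contDiff_polynomial_eval p).contDiffOn
  exists_polynomial _ _ := ⟨p, hp, fun _ _ => rfl⟩

/-- The real vector space of splines of degree `n + 1` and smoothness `n` on `[τ 0, τ (m + 1)]`. Its
elements are total functions, so it is not finite-dimensional: their values outside the interval
are arbitrary. -/
def splineSpace (n m : ℕ) (τ : ℕ → ℝ) : Submodule ℝ (ℝ → ℝ) where
  carrier := {H | IsSplineOn n m τ H}
  zero_mem' := by simpa using! isSplineOn_polynomial (p := 0) (by simp)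
  add_mem' := IsSplineOn.add
  smul_mem' a _ hH := hH.const_smul a

end Spline

section TruncatedPower

/-- The truncated power `x ↦ (x - c)₊ ^ n`. -/
def truncPow (c : ℝ) (n : ℕ) (x : ℝ) : ℝ := max (x - c) 0 ^ n

variable {n m : ℕ} {τ : ℕ → ℝ} {c x : ℝ}

theorem truncPow_of_le (hx : x ≤ c) (n : ℕ) : truncPow c (n + 1) x = 0 := by
  rw [truncPow, max_eq_right (sub_nonpos.2 hx), zero_pow n.succ_ne_zero]

theorem truncPow_of_ge (hx : c ≤ x) (n : ℕ) : truncPow c n x = (x - c) ^ n := by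
  rw [truncPow, max_eq_left (sub_nonneg.2 hx)]

theorem continuous_truncPow (c : ℝ) (n : ℕ) : Continuous (truncPow c n) := by
  unfold truncPow
  fun_prop

theorem hasDerivAt_truncPow (c : ℝ) (n : ℕ) (x : ℝ) :
    HasDerivAt (truncPow c (n + 2)) ((n + 2) * truncPow c (n + 1) x) x := by
  refine hasDerivAt_of_hasDerivAt_of_ne' (g := fun x => (n + 2) * truncPow c (n + 1) x)
    (x := c) (fun z hz => ?_)
    (continuous_truncPow c _).continuousAt
    (continuous_const.mul (continuous_truncPow c _)).continuousAt x
  rcases hz.lt_or_gt with hlt | hgt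
  · rw [truncPow_of_le hlt.le, mul_zero]
    refine (hasDerivAt_const z (0 : ℝ)).congr_of_eventuallyEq ?_
    filter_upwards [Iio_mem_nhds hlt] with w hw using truncPow_of_le hw.le _
  · rw [truncPow_of_ge hgt.le]
    have hpow : HasDerivAt (fun w => (w - c) ^ (n + 2)) ((n + 2) * (z - c) ^ (n + 1)) z := by
      simpa using ((hasDerivAt_id z).sub_const c).fun_pow (n + 2)
    refine hpow.congr_of_eventuallyEq ?_
    filter_upwards [Ioi_mem_nhds hgt] with w hw using truncPow_of_ge hw.le _

theorem contDiff_truncPow (c : ℝ) (n : ℕ) : ContDiff ℝ n (truncPow c (n + 1)) := by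
  induction n with
  | zero => exact contDiff_zero.2 (continuous_truncPow c 1)
  | succ n ih =>
    have hderiv : deriv (truncPow c (n + 2)) = fun x => (n + 2) * truncPow c (n + 1) x :=
      funext fun x => (hasDerivAt_truncPow c n x).deriv
    rw [Nat.cast_succ, contDiff_succ_iff_deriv, hderiv]
    exact ⟨fun x => (hasDerivAt_truncPow c n x).differentiableAt, by simp,
      contDiff_const.mul ih⟩

theorem isSplineOn_truncPow (hτ : StrictMonoOn τ (Iic (m + 1))) {k : ℕ} (hk : k ≤ m + 1) :
    IsSplineOn n m τ (truncPow (τ k) (n + 1)) where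
  contDiffOn := (contDiff_truncPow (τ k) n).contDiffOn
  exists_polynomial i hi := by
    rcases le_or_gt k i with hki | hik
    · have hle : τ k ≤ τ i := hτ.monotoneOn (mem_Iic.2 hk) (mem_Iic.2 (by omega)) hki
      refine ⟨(X - C (τ k)) ^ (n + 1), by simp, fun x hx => ?_⟩
      rw [truncPow_of_ge (hle.trans hx.1)]
      simp
    · have hle : τ (i + 1) ≤ τ k := hτ.monotoneOn (mem_Iic.2 (by omega)) (mem_Iic.2 hk) hik
      refine ⟨0, by simp, fun x hx => ?_⟩
      rw [truncPow_of_le (hx.2.trans hle), eval_zero]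

/-- The parametrization of splines by the truncated power basis: a polynomial of degree at most
`n + 1` and one coefficient for each of the interior knots `τ 1, …, τ m`. -/
noncomputable def truncPowSpline (n m : ℕ) (τ : ℕ → ℝ) :
    degreeLT ℝ (n + 2) × (Fin m → ℝ) →ₗ[ℝ] ℝ → ℝ :=
  (LinearMap.pi leval ∘ₗ (degreeLT ℝ (n + 2)).subtype).coprod
    (Fintype.linearCombination ℝ fun j => truncPow (τ (j + 1)) (n + 1))

variable {q : degreeLT ℝ (n + 2) × (Fin m → ℝ)}

theorem truncPowSpline_apply :
    truncPowSpline n m τ q x =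
      (q.1 : ℝ[X]).eval x + ∑ j, q.2 j * truncPow (τ (j + 1)) (n + 1) x := by
  simp [truncPowSpline, Fintype.linearCombination_apply]

theorem truncPowSpline_mem_splineSpace (hτ : StrictMonoOn τ (Iic (m + 1)))
    (q : degreeLT ℝ (n + 2) × (Fin m → ℝ)) : truncPowSpline n m τ q ∈ splineSpace n m τ := by
  have hdeg : (q.1 : ℝ[X]).natDegree ≤ n + 1 :=
    natDegree_le_of_degree_le <| mem_degreeLE.1 <| degreeLT_succ_eq_degreeLE.le q.1.2
  have hsum : (fun x => (q.1 : ℝ[X]).eval x) + ∑ j, q.2 j • truncPow (τ (j + 1)) (n + 1) ∈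
      splineSpace n m τ :=
    add_mem (isSplineOn_polynomial hdeg) (sum_mem fun j _ =>
      Submodule.smul_mem _ _ (isSplineOn_truncPow hτ (by omega)))
  convert hsum using 1
  funext x
  simp [truncPowSpline_apply]

theorem truncPowSpline_polynomial_eq_zero (hτ : StrictMonoOn τ (Iic (m + 1)))
    (hq : EqOn (truncPowSpline n m τ q) 0 (Icc (τ 0) (τ (m + 1)))) : q.1 = 0 := by
  have hroots : Icc (τ 0) (τ 1) ⊆ {x | (q.1 : ℝ[X]).IsRoot x} := by
    intro x hx
    have hx' := hq (piece_subset_Icc hτ m.zero_le hx)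
    rw [truncPowSpline_apply, Finset.sum_eq_zero, add_zero] at hx'
    · exact hx'
    · intro j _
      have hle : τ 1 ≤ τ (j + 1) :=
        hτ.monotoneOn (mem_Iic.2 (by omega)) (mem_Iic.2 (by omega)) (by omega)
      rw [truncPow_of_le (hx.2.trans hle), mul_zero]
  have hinf : (Icc (τ 0) (τ 1)).Infinite := Icc_infinite (knot_lt_succ hτ m.zero_le)
  exact Subtype.ext (eq_zero_of_infinite_isRoot _ (hinf.mono hroots))

theorem truncPowSpline_coeff_eq_zero (hτ : StrictMonoOn τ (Iic (m + 1)))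
    (hq : EqOn (truncPowSpline n m τ q) 0 (Icc (τ 0) (τ (m + 1)))) (j : Fin m) : q.2 j = 0 := by
  induction j using WellFoundedLT.induction with
  | ind j ih =>
    have hlt : τ (j + 1) < τ (j + 1 + 1) := knot_lt_succ hτ (by omega)
    have heval := hq (knot_mem_Icc hτ (i := j + 1 + 1) (by omega))
    rw [truncPowSpline_apply, truncPowSpline_polynomial_eq_zero hτ hq, Submodule.coe_zero,
      eval_zero, zero_add, Finset.sum_eq_single j, truncPow_of_ge hlt.le] at heval
    · exact (mul_eq_zero.1 heval).resolve_right (pow_ne_zero _ (sub_pos.2 hlt).ne')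
    · intro i _ hij
      rcases hij.lt_or_gt with hlt_j | hgt_j
      · rw [ih i hlt_j, zero_mul]
      · have hle : τ (j + 1 + 1) ≤ τ (i + 1) :=
          hτ.monotoneOn (mem_Iic.2 (by omega)) (mem_Iic.2 (by omega)) (by omega)
        rw [truncPow_of_le hle, mul_zero]
    · exact fun hj => absurd (Finset.mem_univ j) hj

theorem truncPowSpline_eq_zero (hτ : StrictMonoOn τ (Iic (m + 1)))
    (hq : EqOn (truncPowSpline n m τ q) 0 (Icc (τ 0) (τ (m + 1)))) : q = 0 :=
  Prod.ext (truncPowSpline_polynomial_eq_zero hτ hq)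
    (funext (truncPowSpline_coeff_eq_zero hτ hq))

end TruncatedPower

section Hermite

variable {n m : ℕ} {τ : ℕ → ℝ}

theorem IsSplineOn.differentiableWithinAt_knot {H : ℝ → ℝ} (hτ : StrictMonoOn τ (Iic (m + 1)))
    (hn : n ≠ 0) (hH : IsSplineOn n m τ H) {i : ℕ} (hi : i ≤ m + 1) :
    DifferentiableWithinAt ℝ H (Icc (τ 0) (τ (m + 1))) (τ i) :=
  hH.contDiffOn.differentiableOn (by exact_mod_cast hn) _ (knot_mem_Icc hτ hi)

/-- The values and first derivatives of a spline at the `m + 2` knots. The derivatives are taken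
within `[τ 0, τ (m + 1)]`; positive smoothness makes them exist, hence linear in the spline. -/
noncomputable def hermiteData (hτ : StrictMonoOn τ (Iic (m + 1))) (hn : n ≠ 0) :
    splineSpace n m τ →ₗ[ℝ] Fin (m + 2) → ℝ × ℝ where
  toFun H i := (H.1 (τ i), derivWithin H.1 (Icc (τ 0) (τ (m + 1))) (τ i))
  map_add' H₁ H₂ := by
    funext i
    have h₁ := H₁.2.differentiableWithinAt_knot hτ hn i.is_le
    have h₂ := H₂.2.differentiableWithinAt_knot hτ hn i.is_le
    exact Prod.ext rfl (derivWithin_add h₁ h₂)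
  map_smul' a H := by
    funext i
    have hH := H.2.differentiableWithinAt_knot hτ hn i.is_le
    exact Prod.ext rfl (derivWithin_const_smul a hH)

theorem eqOn_zero_of_hermiteData_eq_zero (hτ : StrictMonoOn τ (Iic (m + 1))) (hn : 2 ≤ n)
    (hnm : n ≤ m + 2) {H : splineSpace n m τ} (hH : hermiteData hτ (by omega) H = 0) :
    EqOn H.1 0 (Icc (τ 0) (τ (m + 1))) :=
  H.2.eqOn_zero hτ hn hnm
    (fun i hi => congrArg Prod.fst (congrFun hH ⟨i, Nat.lt_succ_of_le hi⟩))
    (fun i hi => congrArg Prod.snd (congrFun hH ⟨i, Nat.lt_succ_of_le hi⟩))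

theorem hermiteData_surjective (hτ : StrictMonoOn τ (Iic (m + 1))) :
    Function.Surjective (hermiteData (n := m + 2) hτ (by omega)) := by
  let T := (truncPowSpline (m + 2) m τ).codRestrict (splineSpace (m + 2) m τ)
    (truncPowSpline_mem_splineSpace hτ)
  let Φ := hermiteData hτ (by omega) ∘ₗ T
  have hinj : Function.Injective Φ := (injective_iff_map_eq_zero Φ).2 fun q hq =>
    truncPowSpline_eq_zero hτ (eqOn_zero_of_hermiteData_eq_zero hτ (by omega) le_rfl hq)
  have : FiniteDimensional ℝ (degreeLT ℝ (m + 2 + 2)) :=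
    (degreeLTEquiv ℝ (m + 2 + 2)).symm.finiteDimensional
  have hrank : Module.finrank ℝ (degreeLT ℝ (m + 2 + 2) × (Fin m → ℝ)) =
      Module.finrank ℝ (Fin (m + 2) → ℝ × ℝ) := by
    rw [Module.finrank_prod, (degreeLTEquiv ℝ (m + 2 + 2)).finrank_eq]
    simp only [Module.finrank_pi_fintype, Module.finrank_prod, Module.finrank_self,
      Finset.sum_const, Finset.card_univ, Fintype.card_fin, smul_eq_mul]
    ring
  have hsurj : Function.Surjective (hermiteData (n := m + 2) hτ (by omega) ∘ T) :=
    (LinearMap.injective_iff_surjective_of_finrank_eq_finrank hrank).1 hinj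
  exact hsurj.of_comp

/-- `IsHermiteSpline m τ c d H` says that the spline `H` of degree `m + 3` with interior knots
`τ 1, …, τ m` takes the values `c i` and has the first derivatives `d i` at the knots `τ i`. This is
the degree for which the number of conditions is the dimension of the spline space. -/
def IsHermiteSpline (m : ℕ) (τ c d : ℕ → ℝ) (H : ℝ → ℝ) : Prop :=
  IsSplineOn (m + 2) m τ H ∧
    ∀ i ≤ m + 1, H (τ i) = c i ∧ derivWithin H (Icc (τ 0) (τ (m + 1))) (τ i) = d i

theorem exists_isHermiteSpline (hτ : StrictMonoOn τ (Iic (m + 1))) (c d : ℕ → ℝ) :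
    ∃ H, IsHermiteSpline m τ c d H := by
  obtain ⟨H, hH⟩ := hermiteData_surjective hτ fun i => (c i, d i)
  refine ⟨H, H.2, fun i hi => ?_⟩
  exact Prod.ext_iff.1 (congrFun hH ⟨i, Nat.lt_succ_of_le hi⟩)

theorem IsHermiteSpline.eqOn (hτ : StrictMonoOn τ (Iic (m + 1))) {c d : ℕ → ℝ} {H₁ H₂ : ℝ → ℝ}
    (h₁ : IsHermiteSpline m τ c d H₁) (h₂ : IsHermiteSpline m τ c d H₂) :
    EqOn H₁ H₂ (Icc (τ 0) (τ (m + 1))) := by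
  let S₁ : splineSpace (m + 2) m τ := ⟨H₁, h₁.1⟩
  let S₂ : splineSpace (m + 2) m τ := ⟨H₂, h₂.1⟩
  have hne : m + 2 ≠ 0 := by omega
  have hdata : hermiteData hτ hne (S₁ - S₂) = 0 := by
    rw [map_sub, sub_eq_zero]
    funext i
    exact Prod.ext ((h₁.2 i i.is_le).1.trans (h₂.2 i i.is_le).1.symm)
      ((h₁.2 i i.is_le).2.trans (h₂.2 i i.is_le).2.symm)
  exact fun x hx => sub_eq_zero.1
    (eqOn_zero_of_hermiteData_eq_zero hτ (by omega) le_rfl hdata hx)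

theorem isHermiteSplineInterp_iff {k : ℕ} (hk : 2 ≤ k) {f H : ℝ → ℝ} :
    IsHermiteSplineInterp k τ f H ↔ IsHermiteSpline (2 * k - 4) τ (fun i => f (τ i))
      (fun i => derivWithin f (Icc (τ 0) (τ (2 * k - 3))) (τ i)) H := by
  obtain ⟨K, rfl⟩ := Nat.exists_eq_add_of_le' hk
  have h₁ : 2 * (K + 2) - 1 = 2 * K + 3 := by omega
  have h₂ : 2 * (K + 2) - 2 = 2 * K + 2 := by omega
  have h₃ : 2 * (K + 2) - 3 = 2 * K + 1 := by omega
  have h₄ : 2 * (K + 2) - 4 = 2 * K := by omega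
  simp only [IsHermiteSplineInterp, IsHermiteSpline, h₁, h₂, h₃, h₄, Nat.lt_succ_iff,
    ← and_assoc]
  exact and_congr_left' ⟨fun h => ⟨h.1, h.2⟩, fun h => ⟨h.1, h.2⟩⟩

end Hermite

theorem stmt0_general (m : ℕ) (τ : ℕ → ℝ) (hτ : ∀ i ≤ m, τ i < τ (i + 1)) (c d : ℕ → ℝ) :
    (∃ H, IsHermiteSpline m τ c d H) ∧
      ∀ H₁ H₂, IsHermiteSpline m τ c d H₁ → IsHermiteSpline m τ c d H₂ →
        EqOn H₁ H₂ (Icc (τ 0) (τ (m + 1))) := by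
  have hmono : StrictMonoOn τ (Iic (m + 1)) :=
    strictMonoOn_Iic_of_lt_succ fun i hi => hτ i (Nat.lt_succ_iff.1 hi)
  exact ⟨exists_isHermiteSpline hmono c d, fun _ _ h₁ h₂ => h₁.eqOn hmono h₂⟩

/-- existence and uniqueness of the Hermite spline interpolant of a
continuously differentiable function `f` at the `2k-2` nodes
`a = y 0 < y 1 < ⋯ < y (2k-3) = b`. -/
theorem stmt0 (k : ℕ) (hk : 2 ≤ k) (a b : ℝ) (hab : a < b)
    (y : ℕ → ℝ) (hy0 : y 0 = a) (hyl : y (2*k-3) = b)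
    (hmono : ∀ i, i < 2*k-3 → y i < y (i+1))
    (f : ℝ → ℝ) (hf : ContDiff ℝ 1 f) :
    (∃ H : ℝ → ℝ, IsHermiteSplineInterp k y f H) ∧
    (∀ H₁ H₂ : ℝ → ℝ, IsHermiteSplineInterp k y f H₁ →
      IsHermiteSplineInterp k y f H₂ → EqOn H₁ H₂ (Icc a b)) := by
  have hlast : 2 * k - 3 = 2 * k - 4 + 1 := by omega
  simp only [isHermiteSplineInterp_iff hk, ← hy0, ← hyl, hlast]
  exact stmt0_general (2 * k - 4) y (fun i hi => hmono i (by omega)) _ _
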